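/- For each integer M ≥ 2 let P_M be the behaviour with M settings defined by P_M(a,b|x,y) = (1/4)·(1 − a·b·cos(π(2(x−y)−1)/(2M))) for a,b ∈ {−1,+1} and x,y ∈ {1,…,M} (the quantum statistics of a maximally entangled two-qubit state with chained measurement settings). Then for every decomposition P_M = p·P_L + (1−p)·Q, where p ∈ [0,1], P_L is a behaviour admitting an LHV+FHV model and Q is a behaviour, one has p ≤ M·(1 − cos(π/(2M))). In particular the supremum of such p (which equals μ_F(P_M) = μ_L(P_M)) tends to 0 as M → ∞. -/

import Mathlib

/-!
Write `c = cos (π / (2M))`. In the chained behaviour the outcomes agree with probability only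
`(1 - c) / 2` on each of the `2M - 1` adjacent pairs `(x, x)` and `(x + 1, x)`, and disagree with
probability only `(1 - c) / 2` on the closing pair `(0, M - 1)`.

A local-free behaviour cannot make all of these events rare: if the outcomes differ along the whole
chain `x₀, y₀, x₁, y₁, …, y_{M-1}` of odd length, then they differ at its two ends. In probabilities
this is the quadrangle inequality `LocalFree.probEq_quadrangle`, iterated along the chain. Since
`p * P_L` is dominated entrywise by the chained behaviour, adding the `2M` small probabilities
gives `p ≤ M (1 - c)`, which is at most `π² / (8M)` because `1 - t² / 2 ≤ cos t`.
-/

open scoped BigOperators Classical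
open Finset

noncomputable section

/-- The real value `±1` associated with a Boolean outcome. -/
def outVal (a : Bool) : ℝ := if a then 1 else -1

/-- A behaviour: nonnegative probabilities summing to one for every pair of settings. -/
def IsBehaviour {M N : ℕ} (P : Bool → Bool → Fin M → Fin N → ℝ) : Prop :=
  (∀ a b x y, 0 ≤ P a b x y) ∧ (∀ x y, ∑ a, ∑ b, P a b x y = 1)

/-- A behaviour admits an LHV+FHV model (is local-free). -/
def LocalFree {M N : ℕ} (P : Bool → Bool → Fin M → Fin N → ℝ) : Prop :=
  ∃ (n : ℕ) (q : Fin n → ℝ) (A : Bool → Fin M → Fin n → ℝ) (B : Bool → Fin N → Fin n → ℝ),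
    (∀ l, 0 ≤ q l) ∧ (∑ l, q l = 1) ∧
    (∀ a x l, 0 ≤ A a x l) ∧ (∀ x l, ∑ a, A a x l = 1) ∧
    (∀ b y l, 0 ≤ B b y l) ∧ (∀ y l, ∑ b, B b y l = 1) ∧
    (∀ a b x y, P a b x y = ∑ l, q l * A a x l * B b y l)

/-- The chained-Bell quantum behaviour of a maximally entangled two-qubit state
with `M` settings per side (settings `x, y ∈ {1, …, M}` encoded as `Fin M`). -/
def chainedBehaviour (M : ℕ) : Bool → Bool → Fin M → Fin M → ℝ :=
  fun a b x y => (1 / 4) * (1 - outVal a * outVal b *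
    Real.cos (Real.pi * (2 * ((x.1 : ℝ) - (y.1 : ℝ)) - 1) / (2 * (M : ℝ))))

/-- The probability that the two outcomes agree, for settings `x` and `y`. -/
def probEq {M N : ℕ} (P : Bool → Bool → Fin M → Fin N → ℝ) (x : Fin M) (y : Fin N) : ℝ :=
  P true true x y + P false false x y

/-- The probability that the two outcomes differ, for settings `x` and `y`. -/
def probNe {M N : ℕ} (P : Bool → Bool → Fin M → Fin N → ℝ) (x : Fin M) (y : Fin N) : ℝ :=
  P true false x y + P false true x y

lemma IsBehaviour.probEq_add_probNe {M N : ℕ} {P : Bool → Bool → Fin M → Fin N → ℝ}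
    (h : IsBehaviour P) (x : Fin M) (y : Fin N) : probEq P x y + probNe P x y = 1 := by
  have := h.2 x y
  simp only [Fintype.sum_bool] at this
  unfold probEq probNe
  linarith

/-- For two-valued outcomes `a, a₂` and `b, b₂`, if `a ≠ b`, `a₂ ≠ b` and `a₂ ≠ b₂` then `a ≠ b₂`.
The inequality is the union bound for this implication, written for independent outcomes with
`s, s₂` and `t, t₂` the probabilities of `true`. -/
lemma agree_quadrangle {s s₂ t t₂ : ℝ} (hs : 0 ≤ s) (hs1 : s ≤ 1) (hs₂ : 0 ≤ s₂) (hs1₂ : s₂ ≤ 1)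
    (ht : 0 ≤ t) (ht1 : t ≤ 1) (ht₂ : 0 ≤ t₂) (ht1₂ : t₂ ≤ 1) :
    s * t₂ + (1 - s) * (1 - t₂) ≤ (s * t + (1 - s) * (1 - t)) +
      (s₂ * t + (1 - s₂) * (1 - t)) + (s₂ * t₂ + (1 - s₂) * (1 - t₂)) := by
  -- The probability of disagreement of two independent bits satisfies the triangle inequality.
  have tri : ∀ u r v : ℝ, 0 ≤ u → u ≤ 1 → 0 ≤ r → r ≤ 1 → 0 ≤ v → v ≤ 1 →
      u * (1 - v) + (1 - u) * v ≤ (u * (1 - r) + (1 - u) * r) + (r * (1 - v) + (1 - r) * v) := by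
    intro u r v hu hu1 hr hr1 hv hv1
    have h1 : 0 ≤ r * ((1 - u) * (1 - v)) :=
      mul_nonneg hr (mul_nonneg (sub_nonneg.2 hu1) (sub_nonneg.2 hv1))
    have h2 : 0 ≤ (1 - r) * (u * v) := mul_nonneg (sub_nonneg.2 hr1) (mul_nonneg hu hv)
    linarith
  -- Flipping Bob's bits turns agreement into disagreement.
  have h1 := tri s (1 - t) (1 - t₂) hs hs1 (by linarith) (by linarith) (by linarith) (by linarith)
  have h2 := tri (1 - t) s₂ (1 - t₂) (by linarith) (by linarith) hs₂ hs1₂ (by linarith)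
    (by linarith)
  linarith

lemma LocalFree.probEq_quadrangle {M N : ℕ} {P : Bool → Bool → Fin M → Fin N → ℝ}
    (h : LocalFree P) (x x' : Fin M) (y y' : Fin N) :
    probEq P x y' ≤ probEq P x y + probEq P x' y + probEq P x' y' := by
  obtain ⟨n, q, A, B, hq, -, hA, hA1, hB, hB1, hP⟩ := h
  simp only [Fintype.sum_bool] at hA1 hB1
  simp only [probEq, hP, ← Finset.sum_add_distrib]
  refine Finset.sum_le_sum fun l _ => ?_
  have eA : ∀ x, A false x l = 1 - A true x l := fun x => by linarith [hA1 x l]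
  have eB : ∀ y, B false y l = 1 - B true y l := fun y => by linarith [hB1 y l]
  have lA : ∀ x, A true x l ≤ 1 := fun x => by linarith [hA1 x l, hA false x l]
  have lB : ∀ y, B true y l ≤ 1 := fun y => by linarith [hB1 y l, hB false y l]
  have key := mul_le_mul_of_nonneg_left
    (agree_quadrangle (hA true x l) (lA x) (hA true x' l) (lA x')
      (hB true y l) (lB y) (hB true y' l) (lB y')) (hq l)
  simp only [eA, eB]
  linarith

lemma probEq_chained_diag {M : ℕ} (x : Fin M) :
    probEq (chainedBehaviour M) x x = (1 - Real.cos (Real.pi / (2 * (M : ℝ)))) / 2 := by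
  have e : Real.pi * (2 * ((x.1 : ℝ) - (x.1 : ℝ)) - 1) / (2 * (M : ℝ)) =
      -(Real.pi / (2 * (M : ℝ))) := by ring
  simp only [probEq, chainedBehaviour, outVal, e, Real.cos_neg]
  norm_num
  ring

lemma probEq_chained_succ {M : ℕ} (x y : Fin M) (h : x.1 = y.1 + 1) :
    probEq (chainedBehaviour M) x y = (1 - Real.cos (Real.pi / (2 * (M : ℝ)))) / 2 := by
  have e : Real.pi * (2 * ((x.1 : ℝ) - (y.1 : ℝ)) - 1) / (2 * (M : ℝ)) =
      Real.pi / (2 * (M : ℝ)) := by rw [h]; push_cast; ring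
  simp only [probEq, chainedBehaviour, outVal, e]
  norm_num
  ring

lemma probNe_chained_ends {M : ℕ} (x y : Fin M) (hx : x.1 = 0) (hy : y.1 + 1 = M) :
    probNe (chainedBehaviour M) x y = (1 - Real.cos (Real.pi / (2 * (M : ℝ)))) / 2 := by
  have hM : (M : ℝ) ≠ 0 := by
    have : M ≠ 0 := by omega
    exact_mod_cast this
  have hy' : (y.1 : ℝ) = M - 1 := by rw [eq_sub_iff_add_eq]; exact_mod_cast hy
  have e : Real.pi * (2 * ((x.1 : ℝ) - (y.1 : ℝ)) - 1) / (2 * (M : ℝ)) =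
      -(Real.pi - Real.pi / (2 * (M : ℝ))) := by
    rw [hx, hy']; push_cast; field_simp; ring
  simp only [probNe, chainedBehaviour, outVal, e, Real.cos_neg, Real.cos_pi_sub]
  norm_num
  ring

lemma free_fraction_le {M : ℕ} (hM : 2 ≤ M) {p : ℝ} (hp : p ∈ Set.Icc (0 : ℝ) 1)
    {PL Q : Bool → Bool → Fin M → Fin M → ℝ}
    (hPL : IsBehaviour PL) (hloc : LocalFree PL) (hQ : IsBehaviour Q)
    (hdec : ∀ a b x y, chainedBehaviour M a b x y = p * PL a b x y + (1 - p) * Q a b x y) :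
    p ≤ (M : ℝ) * (1 - Real.cos (Real.pi / (2 * (M : ℝ)))) := by
  have hle : ∀ a b x y, p * PL a b x y ≤ chainedBehaviour M a b x y := fun a b x y => by
    have := mul_nonneg (sub_nonneg.2 hp.2) (hQ.1 a b x y)
    linarith [hdec a b x y]
  have hEq : ∀ x y, p * probEq PL x y ≤ probEq (chainedBehaviour M) x y := fun x y => by
    unfold probEq
    linarith [hle true true x y, hle false false x y]
  have hNe : ∀ x y, p * probNe PL x y ≤ probNe (chainedBehaviour M) x y := fun x y => by
    unfold probNe
    linarith [hle true false x y, hle false true x y]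
  set c := Real.cos (Real.pi / (2 * (M : ℝ))) with hc
  -- The path from `x₀` to `y_k` has `2k + 1` edges.
  have chain : ∀ (k : ℕ) (hk : k < M),
      p * probEq PL ⟨0, by omega⟩ ⟨k, hk⟩ ≤ (2 * (k : ℝ) + 1) * ((1 - c) / 2) := by
    intro k
    induction k with
    | zero =>
      intro hk
      have := hEq ⟨0, hk⟩ ⟨0, hk⟩
      rw [probEq_chained_diag, ← hc] at this
      simpa using this
    | succ k ih =>
      intro hk
      have h0 := ih (by omega)
      have h1 := hEq ⟨k + 1, hk⟩ ⟨k, by omega⟩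
      rw [probEq_chained_succ _ _ rfl, ← hc] at h1
      have h2 := hEq ⟨k + 1, hk⟩ ⟨k + 1, hk⟩
      rw [probEq_chained_diag, ← hc] at h2
      have h3 := mul_le_mul_of_nonneg_left
        (hloc.probEq_quadrangle ⟨0, by omega⟩ ⟨k + 1, hk⟩ ⟨k, by omega⟩ ⟨k + 1, hk⟩) hp.1
      push_cast
      linarith
  have h1 := chain (M - 1) (by omega)
  have h2 := hNe ⟨0, by omega⟩ ⟨M - 1, by omega⟩
  rw [probNe_chained_ends _ _ rfl (Nat.sub_add_cancel (by omega)), ← hc] at h2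
  have h3 := congrArg (p * ·) (hPL.probEq_add_probNe ⟨0, by omega⟩ ⟨M - 1, by omega⟩)
  simp only [mul_add, mul_one] at h3
  rw [Nat.cast_sub (by omega), Nat.cast_one] at h1
  linarith

lemma chained_bound_le {M : ℕ} (hM : 2 ≤ M) :
    (M : ℝ) * (1 - Real.cos (Real.pi / (2 * (M : ℝ)))) ≤ Real.pi ^ 2 / 8 / (M : ℝ) := by
  have hM0 : (0 : ℝ) < M := by
    have : 0 < M := by omega
    exact_mod_cast this
  have h := Real.one_sub_sq_div_two_le_cos (x := Real.pi / (2 * (M : ℝ)))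
  calc (M : ℝ) * (1 - Real.cos (Real.pi / (2 * (M : ℝ))))
      ≤ M * ((Real.pi / (2 * (M : ℝ))) ^ 2 / 2) :=
        mul_le_mul_of_nonneg_left (by linarith) hM0.le
    _ = Real.pi ^ 2 / 8 / (M : ℝ) := by field_simp; ring

theorem chained_free_fraction_vanishes :
    (∀ M : ℕ, 2 ≤ M → ∀ p : ℝ, p ∈ Set.Icc (0 : ℝ) 1 →
      ∀ PL Q : Bool → Bool → Fin M → Fin M → ℝ,
        IsBehaviour PL → LocalFree PL → IsBehaviour Q →
        (∀ a b x y, chainedBehaviour M a b x y = p * PL a b x y + (1 - p) * Q a b x y) →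
        p ≤ (M : ℝ) * (1 - Real.cos (Real.pi / (2 * (M : ℝ))))) ∧
    Filter.Tendsto
      (fun M : ℕ => sSup {p : ℝ | p ∈ Set.Icc (0 : ℝ) 1 ∧
        ∃ PL Q : Bool → Bool → Fin M → Fin M → ℝ,
          IsBehaviour PL ∧ LocalFree PL ∧ IsBehaviour Q ∧
          ∀ a b x y, chainedBehaviour M a b x y = p * PL a b x y + (1 - p) * Q a b x y})
      Filter.atTop (nhds 0) := by
  refine ⟨fun M hM p hp PL Q hPL hloc hQ hdec => free_fraction_le hM hp hPL hloc hQ hdec, ?_⟩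
  refine squeeze_zero' (Filter.Eventually.of_forall fun M => Real.sSup_nonneg fun p hp => hp.1.1)
    ?_ (tendsto_const_div_atTop_nhds_zero_nat (Real.pi ^ 2 / 8))
  filter_upwards [Filter.eventually_ge_atTop 2] with M hM
  refine Real.sSup_le ?_ (by positivity)
  rintro p ⟨hp, PL, Q, hPL, hloc, hQ, hdec⟩
  exact (free_fraction_le hM hp hPL hloc hQ hdec).trans (chained_bound_le hM)
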